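/- Let K be a field with more than 3 elements, let Sym₂(K) denote the linear subspace of all symmetric 2×2 matrices over K, viewed as K-linear maps K² → K², and let D₀ = {0} × K ⊆ K². Then every K-linear map F : Sym₂(K) → K² that is quasi-range-compatible with respect to D₀ is local, i.e., there exists x ∈ K² with F(M) = Mx for all M ∈ Sym₂(K). -/

import Mathlib

/-- The linear subspace of symmetric `2 × 2` matrices over `K`. -/
def symmetricMatrices₂ (K : Type*) [Field K] :
    Submodule K (Matrix (Fin 2) (Fin 2) K) where
  carrier := {M | M.IsSymm}
  add_mem' := fun {a b} ha hb => by
    simp only [Set.mem_setOf_eq, Matrix.IsSymm, Matrix.transpose_add] at *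
    rw [ha, hb]
  zero_mem' := by simp [Set.mem_setOf_eq, Matrix.IsSymm]
  smul_mem' := fun c {M} hM => by
    simp only [Set.mem_setOf_eq, Matrix.IsSymm, Matrix.transpose_smul] at *
    rw [hM]

open Polynomial in
theorem cubic_coeffs_zero_aux (K : Type*) [Field K] (hK : 3 < Cardinal.mk K) (a b c d : K)
    (h : ∀ t : K, a * t ^ 3 + b * t ^ 2 + c * t + d = 0) : a = 0 ∧ b = 0 ∧ c = 0 ∧ d = 0 := by
  have h4 : ((4 : ℕ) : Cardinal) ≤ Cardinal.mk K := by
    have := Order.succ_le_of_lt hK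
    have h3 : Order.succ (3 : Cardinal) = ((4 : ℕ) : Cardinal) := by
      have := Cardinal.nat_succ 3
      simpa using this.symm
    rwa [h3] at this
  have h5 : Cardinal.lift.{_, 0} (Cardinal.mk (Fin 4)) ≤ Cardinal.lift.{0} (Cardinal.mk K) := by
    simpa using h4
  obtain ⟨f⟩ := Cardinal.lift_mk_le'.1 h5
  have hp : (C a * X ^ 3 + C b * X ^ 2 + C c * X + C d : K[X]) = 0 := by
    apply Polynomial.eq_zero_of_natDegree_lt_card_of_eval_eq_zero _ f.injective
    · intro i
      simpa using h (f i)
    · have := Polynomial.natDegree_cubic_le (a := a) (b := b) (c := c) (d := d)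
      simp only [Fintype.card_fin]
      omega
  have e (n : ℕ) := congrArg (fun q : K[X] => q.coeff n) hp
  have e0 := e 0
  have e1 := e 1
  have e2 := e 2
  have e3 := e 3
  simp [coeff_X, coeff_C, coeff_X_pow] at e0 e1 e2 e3
  exact ⟨e3, e2, e1, e0⟩

/-- Let `K` be a field with more than 3 elements, `Sym₂(K)` the space
of symmetric `2 × 2` matrices over `K` viewed as linear maps `K² → K²` (via `mulVecLin`),
and `D₀ = {0} × K ⊆ K²` (the kernel of the projection on the first coordinate). Then
every `K`-linear map `F : Sym₂(K) → K²` that is quasi-range-compatible with respect to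
`D₀` is local. -/
theorem quasi_range_compatible_linear_map_on_sym2_is_local
    (K : Type*) [Field K] (hK : 3 < Cardinal.mk K)
    (F : ↥(symmetricMatrices₂ K) →ₗ[K] (Fin 2 → K))
    (hq : ∀ M : ↥(symmetricMatrices₂ K),
      ¬ LinearMap.ker (LinearMap.proj (R := K) (φ := fun _ : Fin 2 => K) 0) ≤
          LinearMap.range (Matrix.mulVecLin (M : Matrix (Fin 2) (Fin 2) K)) →
      F M ∈ LinearMap.range (Matrix.mulVecLin (M : Matrix (Fin 2) (Fin 2) K))) :
    ∃ x : Fin 2 → K, ∀ M : ↥(symmetricMatrices₂ K),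
      F M = (M : Matrix (Fin 2) (Fin 2) K).mulVec x := by
  have m11 : (!![1, 0; 0, 0] : Matrix (Fin 2) (Fin 2) K) ∈ symmetricMatrices₂ K := by
    change Matrix.transpose _ = _
    ext i j; fin_cases i <;> fin_cases j <;> simp
  have m12 : (!![0, 1; 1, 0] : Matrix (Fin 2) (Fin 2) K) ∈ symmetricMatrices₂ K := by
    change Matrix.transpose _ = _
    ext i j; fin_cases i <;> fin_cases j <;> simp
  have m22 : (!![0, 0; 0, 1] : Matrix (Fin 2) (Fin 2) K) ∈ symmetricMatrices₂ K := by
    change Matrix.transpose _ = _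
    ext i j; fin_cases i <;> fin_cases j <;> simp
  have hF : ∀ M : ↥(symmetricMatrices₂ K), F M =
      M.1 0 0 • F ⟨_, m11⟩ + M.1 0 1 • F ⟨_, m12⟩ + M.1 1 1 • F ⟨_, m22⟩ := by
    intro M
    rw [← map_smul, ← map_smul, ← map_smul, ← map_add, ← map_add]
    congr 1
    have hs : M.1 1 0 = M.1 0 1 := Matrix.IsSymm.apply (show M.1.IsSymm from M.2) 0 1
    ext i j; fin_cases i <;> fin_cases j <;> simp [hs]
  generalize F ⟨_, m11⟩ = a at hF
  generalize F ⟨_, m12⟩ = b at hF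
  generalize F ⟨_, m22⟩ = c at hF
  have key : ∀ t : K, c 0 * t ^ 3 + (b 0 - c 1) * t ^ 2 + (a 0 - b 1) * t + (- a 1) = 0 := by
    intro t
    have mt : (!![1, t; t, t ^ 2] : Matrix (Fin 2) (Fin 2) K) ∈ symmetricMatrices₂ K := by
      change Matrix.transpose _ = _
      ext i j; fin_cases i <;> fin_cases j <;> simp
    have hr : ∀ v ∈ LinearMap.range (Matrix.mulVecLin (!![1, t; t, t ^ 2] :
        Matrix (Fin 2) (Fin 2) K)), v 1 = t * v 0 := by
      rintro v ⟨w, rfl⟩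
      simp [Matrix.mulVec, dotProduct, Fin.sum_univ_two]
      ring
    have h1 := hr _ (hq ⟨_, mt⟩ (by
      intro hle
      have h2 : (![0, 1] : Fin 2 → K) ∈ LinearMap.ker
          (LinearMap.proj (R := K) (φ := fun _ : Fin 2 => K) 0) := by
        simp [LinearMap.mem_ker]
      have h3 := hr _ (hle h2)
      simp at h3))
    rw [hF] at h1
    simp at h1
    linear_combination -h1
  obtain ⟨h0, h1, h2, h3⟩ := cubic_coeffs_zero_aux K hK _ _ _ _ key
  refine ⟨![a 0, b 0], fun M => ?_⟩
  have hs : M.1 1 0 = M.1 0 1 := Matrix.IsSymm.apply (show M.1.IsSymm from M.2) 0 1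
  rw [hF]
  ext i
  fin_cases i
  · simp [Matrix.mulVec, dotProduct, Fin.sum_univ_two, h0]
  · simp [Matrix.mulVec, dotProduct, Fin.sum_univ_two, hs]
    linear_combination -M.1 0 0 * h3 - M.1 0 1 * h2 - M.1 1 1 * h1
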